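/- arXiv:2304.13735 — 5 statements merged into one kernel-verified Lean document; each statement's English description precedes it below -/
import Mathlib

section
/- Let p be a prime, q a power of p, M ≥ 2 an integer, d ≥ 1 and l a divisor of d. Then the number of β ∈ F_{q^{2d}} satisfying β^{q^d+1} = 1 and β^M ∈ F_{q^{2d/l}} equals gcd(M·(q^{2d/l}−1), q^d+1). -/
open Polynomial Matrix

noncomputable section

/-- `f̃(t) = conj(f(0))⁻¹ · t^(deg f) · f̄(1/t)`, where the conjugation `σ` is applied
coefficientwise. -/
def tildePoly {F : Type} [Field F] (σ : F →+* F) (f : F[X]) : F[X] :=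
  Polynomial.C (σ (f.coeff 0))⁻¹ * (f.map σ).reverse

/-- A self-conjugate irreducible monic (SCIM) polynomial with nonzero constant term. -/
def IsSCIM {F : Type} [Field F] (σ : F →+* F) (f : F[X]) : Prop :=
  f.Monic ∧ Irreducible f ∧ f.coeff 0 ≠ 0 ∧ tildePoly σ f = f

/-- An `M̃`-power polynomial: a SCIM polynomial `f` such that `f(x^M)` has a SCIM factor of
degree `deg f`. -/
def IsMtildePowerPoly {F : Type} [Field F] (σ : F →+* F) (M : ℕ) (f : F[X]) : Prop :=
  IsSCIM σ f ∧ ∃ g : F[X], IsSCIM σ g ∧ g.natDegree = f.natDegree ∧ g ∣ f.comp (X ^ M)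

/-- `Ñ_M(q,d)`: the number of `M̃`-power SCIM polynomials of degree `d`. -/
def NtildeM {F : Type} [Field F] (σ : F →+* F) (M d : ℕ) : ℕ :=
  Nat.card {f : F[X] // IsMtildePowerPoly σ M f ∧ f.natDegree = d}

/-- An `M`-power polynomial: a monic irreducible `g` such that `g(x^M)` has an irreducible
factor of degree `deg g`. -/
def IsMPowerPoly {F : Type} [Field F] (M : ℕ) (g : F[X]) : Prop :=
  g.Monic ∧ Irreducible g ∧
    ∃ h : F[X], Irreducible h ∧ h.natDegree = g.natDegree ∧ h ∣ g.comp (X ^ M)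

open scoped Classical in
/-- `R̃_M(q,d)`: the number of unordered pairs `{g, g̃}` with `g` a monic irreducible
degree-`d` `M`-power polynomial and `g ≠ g̃`. -/
def RtildeM {F : Type} [Field F] (σ : F →+* F) (M d : ℕ) : ℕ :=
  Nat.card {P : Finset F[X] // ∃ g : F[X], IsMPowerPoly M g ∧ g.natDegree = d ∧
    g ≠ tildePoly σ g ∧ P = {g, tildePoly σ g}}

/-- `S̃'_M(d,q)`: the number of SCIM polynomials of degree `d` that are not `M̃`-power
polynomials. -/
def StildePrimeM {F : Type} [Field F] (σ : F →+* F) (M d : ℕ) : ℕ :=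
  Nat.card {f : F[X] // IsSCIM σ f ∧ f.natDegree = d ∧ ¬ IsMtildePowerPoly σ M f}

open scoped Classical in
/-- `S'_M(d,q)`: the number of unordered pairs `{g, g̃}` with `g` monic irreducible of
degree `d`, `g ≠ g̃`, and `g` not an `M`-power polynomial. -/
def SPrimeM {F : Type} [Field F] (σ : F →+* F) (M d : ℕ) : ℕ :=
  Nat.card {P : Finset F[X] // ∃ g : F[X], g.Monic ∧ Irreducible g ∧ g.natDegree = d ∧
    g ≠ tildePoly σ g ∧ ¬ IsMPowerPoly M g ∧ P = {g, tildePoly σ g}}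

/-- The anti-diagonal matrix `Λ_n` with all anti-diagonal entries `1`. -/
def antidiagMat (F : Type) [Field F] (n : ℕ) : Matrix (Fin n) (Fin n) F :=
  Matrix.of fun i j => if (i : ℕ) + (j : ℕ) = n - 1 then 1 else 0

/-- Membership in the unitary group `U(n,q²)`:
`A` invertible and `A · Λ_n · Āᵗ = Λ_n`, where `Ā` applies `σ` entrywise. -/
def IsUnitaryMat {F : Type} [Field F] (σ : F →+* F) {n : ℕ}
    (A : Matrix (Fin n) (Fin n) F) : Prop :=
  IsUnit A ∧ A * antidiagMat F n * (A.map σ)ᵀ = antidiagMat F n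

/-- The companion matrix of a polynomial of degree `d`. -/
def companionMat {F : Type} [Field F] (d : ℕ) (f : F[X]) : Matrix (Fin d) (Fin d) F :=
  Matrix.of fun i j =>
    if (j : ℕ) = d - 1 then -f.coeff i else if (i : ℕ) = (j : ℕ) + 1 then 1 else 0

/-- Conjugacy in the general linear group. -/
def ConjGL {F : Type} [Field F] {m : Type} [Fintype m] [DecidableEq m]
    (A B : Matrix m m F) : Prop :=
  ∃ P : Matrix m m F, IsUnit P ∧ B = P * A * P⁻¹

/-- Conjugacy in the unitary group. -/
def ConjU {F : Type} [Field F] (σ : F →+* F) {n : ℕ}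
    (A B : Matrix (Fin n) (Fin n) F) : Prop :=
  ∃ P : Matrix (Fin n) (Fin n) F, IsUnitaryMat σ P ∧ B = P * A * P⁻¹

/-- `A` is an `M`-th power in the unitary group. -/
def IsMPowerInU {F : Type} [Field F] (σ : F →+* F) (M : ℕ) {n : ℕ}
    (A : Matrix (Fin n) (Fin n) F) : Prop :=
  ∃ B : Matrix (Fin n) (Fin n) F, IsUnitaryMat σ B ∧ B ^ M = A

/-- `|U(n,q²)|`. -/
def cardU {F : Type} [Field F] (σ : F →+* F) (n : ℕ) : ℕ :=
  Nat.card {A : Matrix (Fin n) (Fin n) F // IsUnitaryMat σ A}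

/-- Number of conjugacy classes of separable matrices in `U(n,q²)` that are `M`-th powers. -/
def numSepPowerClasses {F : Type} [Field F] (σ : F →+* F) (M n : ℕ) : ℕ :=
  Nat.card (Quot (fun A B : {A : Matrix (Fin n) (Fin n) F // IsUnitaryMat σ A ∧
    Squarefree (Matrix.charpoly A) ∧ IsMPowerInU σ M A} => ConjU σ A.1 B.1))

/-- Number of separable matrices in `U(n,q²)` that are `M`-th powers. -/
def numSepPowerElts {F : Type} [Field F] (σ : F →+* F) (M n : ℕ) : ℕ :=
  Nat.card {A : Matrix (Fin n) (Fin n) F // IsUnitaryMat σ A ∧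
    Squarefree (Matrix.charpoly A) ∧ IsMPowerInU σ M A}

/-- Number of conjugacy classes of cyclic matrices in `U(n,q²)` that are `M`-th powers. -/
def numCycPowerClasses {F : Type} [Field F] (σ : F →+* F) (M n : ℕ) : ℕ :=
  Nat.card (Quot (fun A B : {A : Matrix (Fin n) (Fin n) F // IsUnitaryMat σ A ∧
    minpoly F A = Matrix.charpoly A ∧ IsMPowerInU σ M A} => ConjU σ A.1 B.1))

/-- Number of cyclic matrices in `U(n,q²)` that are `M`-th powers. -/
def numCycPowerElts {F : Type} [Field F] (σ : F →+* F) (M n : ℕ) : ℕ :=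
  Nat.card {A : Matrix (Fin n) (Fin n) F // IsUnitaryMat σ A ∧
    minpoly F A = Matrix.charpoly A ∧ IsMPowerInU σ M A}

/-- Number of conjugacy classes of semisimple matrices in `U(n,q²)` that are `M`-th powers. -/
def numSSPowerClasses {F : Type} [Field F] (σ : F →+* F) (M n : ℕ) : ℕ :=
  Nat.card (Quot (fun A B : {A : Matrix (Fin n) (Fin n) F // IsUnitaryMat σ A ∧
    Squarefree (minpoly F A) ∧ IsMPowerInU σ M A} => ConjU σ A.1 B.1))

/-- Number of semisimple matrices in `U(n,q²)` that are `M`-th powers. -/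
def numSSPowerElts {F : Type} [Field F] (σ : F →+* F) (M n : ℕ) : ℕ :=
  Nat.card {A : Matrix (Fin n) (Fin n) F // IsUnitaryMat σ A ∧
    Squarefree (minpoly F A) ∧ IsMPowerInU σ M A}

/-- `U(f,n)`: block matrix with `n` diagonal blocks `C_f` (of size `k = deg f`) and
identity blocks directly above the diagonal. -/
def blockJordan {F : Type} [Field F] (k n : ℕ) (f : F[X]) :
    Matrix (Fin n × Fin k) (Fin n × Fin k) F :=
  Matrix.of fun ai bj =>
    if ai.1 = bj.1 then companionMat k f ai.2 bj.2
    else if (bj.1 : ℕ) = (ai.1 : ℕ) + 1 then (if ai.2 = bj.2 then 1 else 0) else 0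

/-- `|U(m, q^{2d})| = q^{d·m(m−1)}·Π_{i=1}^m (q^{di} − (−1)^i)` as a rational number. -/
def cardUFormula (q d m : ℕ) : ℚ :=
  (q : ℚ) ^ (d * (m * (m - 1))) * ∏ i ∈ Finset.Icc 1 m, ((q : ℚ) ^ (d * i) - (-1 : ℚ) ^ i)

/-- `|GL(m, q^{2d})| = Π_{i=0}^{m−1} (q^{2dm} − q^{2di})` as a rational number. -/
def cardGLFormula (q d m : ℕ) : ℚ :=
  ∏ i ∈ Finset.range m, ((q : ℚ) ^ (2 * d * m) - (q : ℚ) ^ (2 * d * i))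

instance : TopologicalSpace (PowerSeries ℚ) := by
  unfold PowerSeries MvPowerSeries; infer_instance

section RootsOfUnity

variable {R : Type*} [CommMonoid R]

theorem natCard_setOf_pow_eq_one (n : ℕ) [NeZero n] [HasEnoughRootsOfUnity R n] :
    Nat.card {x : R | x ^ n = 1} = n := by
  rw [← Units.val_set_image_rootsOfUnity,
    Nat.card_image_of_injective Units.val_injective]
  exact HasEnoughRootsOfUnity.natCard_rootsOfUnity R n

theorem pow_eq_self_iff_pow_sub_one_eq_one {x : R} (hx : IsUnit x) {n : ℕ} (hn : n ≠ 0) :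
    x ^ n = x ↔ x ^ (n - 1) = 1 := by
  rw [← hx.mul_eq_right, pow_sub_one_mul hn]

theorem pow_eq_one_and_pow_pow_eq_pow_iff_pow_gcd_eq_one (x : R) (M : ℕ) {N Q : ℕ}
    (hN : N ≠ 0) (hQ : Q ≠ 0) :
    x ^ N = 1 ∧ (x ^ M) ^ Q = x ^ M ↔ x ^ Nat.gcd (M * (Q - 1)) N = 1 := by
  rw [pow_gcd_eq_one, pow_mul, and_comm]
  refine and_congr_left fun hxN => ?_
  have hx : IsUnit x := .of_pow_eq_one hxN hN
  exact pow_eq_self_iff_pow_sub_one_eq_one (hx.pow M) hQ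

end RootsOfUnity

theorem hasEnoughRootsOfUnity_of_dvd_card_sub_one {K : Type*} [Field K] [Fintype K] {n : ℕ}
    (hn : n ∣ Fintype.card K - 1) : HasEnoughRootsOfUnity K n := by
  have hcard : Nat.card Kˣ = Fintype.card K - 1 := by
    rw [Nat.card_units, Nat.card_eq_fintype_card]
  rw [← hcard] at hn
  have all_roots : rootsOfUnity (Nat.card Kˣ) K = ⊤ := top_unique fun _ _ => pow_card_eq_one'
  have : HasEnoughRootsOfUnity K (Nat.card Kˣ) := .of_card_le (by rw [all_roots, Subgroup.card_top])
  exact .of_dvd K hn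

theorem pow_add_one_dvd_pow_two_mul_sub_one (q d : ℕ) : q ^ d + 1 ∣ q ^ (2 * d) - 1 := by
  refine ⟨q ^ d - 1, ?_⟩
  rw [mul_comm 2 d, pow_mul, ← Nat.sq_sub_sq, one_pow]

theorem statement2_general {R : Type*} [CommMonoid R] (M : ℕ) {N Q : ℕ} [NeZero N]
    [HasEnoughRootsOfUnity R N] (hQ : Q ≠ 0) :
    Nat.card {β : R // β ^ N = 1 ∧ (β ^ M) ^ Q = β ^ M} = Nat.gcd (M * (Q - 1)) N := by
  have hgcd : Nat.gcd (M * (Q - 1)) N ∣ N := Nat.gcd_dvd_right _ _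
  have : HasEnoughRootsOfUnity R (Nat.gcd (M * (Q - 1)) N) := .of_dvd R hgcd
  have : NeZero (Nat.gcd (M * (Q - 1)) N) := ⟨Nat.gcd_ne_zero_right (NeZero.ne N)⟩
  simp only [pow_eq_one_and_pow_pow_eq_pow_iff_pow_gcd_eq_one _ M (NeZero.ne N) hQ]
  exact natCard_setOf_pow_eq_one _

/-- the number of `β ∈ F_{q^{2d}}` with `β^{q^d+1} = 1` and
`β^M ∈ F_{q^{2d/l}}` (i.e. `β^M` fixed by `x ↦ x^{q^{2d/l}}`) is
`gcd(M·(q^{2d/l}−1), q^d+1)`. -/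
theorem statement2 (p ℓ q : ℕ) (hp : p.Prime) (hℓ : 0 < ℓ) (hq : q = p ^ ℓ)
    (M : ℕ) (hM : 2 ≤ M) (d : ℕ) (hd : 1 ≤ d) (l : ℕ) (hl : l ∣ d)
    (E : Type) [Field E] [Fintype E] (hE : Fintype.card E = q ^ (2 * d)) :
    Nat.card {β : E // β ^ (q ^ d + 1) = 1 ∧ (β ^ M) ^ (q ^ (2 * d / l)) = β ^ M}
      = Nat.gcd (M * (q ^ (2 * d / l) - 1)) (q ^ d + 1) := by
  have : HasEnoughRootsOfUnity E (q ^ d + 1) :=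
    hasEnoughRootsOfUnity_of_dvd_card_sub_one (hE ▸ pow_add_one_dvd_pow_two_mul_sub_one q d)
  exact statement2_general M (pow_ne_zero _ (hq ▸ pow_ne_zero _ hp.ne_zero))
end
end

section
/- Let p be a prime, q a power of p, M ≥ 2 an integer, and f a SCIM polynomial of odd degree d ≥ 1 over F_{q^2}. If there exists α ∈ U(d,q²) with α^M conjugate to the companion matrix C_f of f, then f(x^M) has a SCIM factor of degree d. -/
open Polynomial Matrix

noncomputable section

/-!
If `α ^ M` is conjugate to the companion matrix of `f`, its characteristic polynomial is `f`, and
`g = α.charpoly` is the required factor. It is self-conjugate because unitarity makes `α` similar to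
the inverse of its conjugate transpose. It is irreducible because, for a root `θ` of any irreducible
factor of the minimal polynomial of `α`, the power `θ ^ M` is a root of `f`, so `θ` has degree at
least `d = deg g`; it then divides `f(x ^ M)` as the minimal polynomial of `α`.
The same argument applies with any polynomial `r(x)` in place of `x ^ M`.
-/

section Irreducibility

variable {K : Type*} [Field K]

theorem natDegree_dvd_natDegree_of_irreducible_of_dvd_comp {f h r : K[X]} (hf : Irreducible f)
    (hh : Irreducible h) (hdvd : h ∣ f.comp r) : f.natDegree ∣ h.natDegree := by
  have : Fact (Irreducible h) := ⟨hh⟩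
  let θ := AdjoinRoot.root h
  have hroot : aeval (aeval θ r) f = 0 := by
    rw [← aeval_comp, AdjoinRoot.aeval_eq, AdjoinRoot.mk_eq_zero]
    exact hdvd
  have hint : IsIntegral K (aeval θ r) := IsAlgebraic.isIntegral ⟨f, hf.ne_zero, hroot⟩
  have hmin : (minpoly K (aeval θ r)).natDegree = f.natDegree := by
    conv_rhs => rw [minpoly.Irreducible.eq_minpoly hf hroot]
    exact (natDegree_C_mul (leadingCoeff_ne_zero.mpr hf.ne_zero)).symm
  have hfinrank : Module.finrank K (AdjoinRoot h) = h.natDegree := by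
    rw [(AdjoinRoot.powerBasis hh.ne_zero).finrank, AdjoinRoot.powerBasis_dim]
  rw [← hmin, ← hfinrank]
  exact minpoly.degree_dvd hint

variable {R m : Type*} [CommRing R] [Fintype m] [DecidableEq m]

theorem nonempty_of_irreducible_charpoly {A : Matrix m m R} (hA : Irreducible A.charpoly) :
    Nonempty m := by
  by_contra hempty
  have : IsEmpty m := not_nonempty_iff.mp hempty
  exact hA.not_isUnit (by simp)

theorem charpoly_dvd_of_irreducible_of_aeval_eq_zero {A : Matrix m m K} {g : K[X]}
    (hA : Irreducible A.charpoly) (hg : aeval A g = 0) : A.charpoly ∣ g := by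
  have := nonempty_of_irreducible_charpoly hA
  rw [minpoly.eq_of_irreducible_of_monic hA A.aeval_self_charpoly A.charpoly_monic]
  exact minpoly.dvd K A hg

theorem aeval_charpoly_aeval_comp_self (A : Matrix m m R) (r : R[X]) :
    aeval A ((aeval A r).charpoly.comp r) = 0 := by
  rw [aeval_comp, aeval_self_charpoly]

theorem irreducible_charpoly_of_irreducible_charpoly_aeval {A : Matrix m m K} {r : K[X]}
    (hr : Irreducible (aeval A r).charpoly) : Irreducible A.charpoly := by
  have := nonempty_of_irreducible_charpoly hr
  obtain ⟨h, hh, hdvd⟩ := WfDvdMonoid.exists_irreducible_factor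
    (minpoly.not_isUnit K A) (minpoly.ne_zero A.isIntegral)
  have hcomp : h ∣ (aeval A r).charpoly.comp r :=
    hdvd.trans (minpoly.dvd K A (aeval_charpoly_aeval_comp_self A r))
  have hdeg : A.charpoly.natDegree ≤ h.natDegree := by
    simpa only [charpoly_natDegree_eq_dim] using Nat.le_of_dvd hh.natDegree_pos
      (natDegree_dvd_natDegree_of_irreducible_of_dvd_comp hr hh hcomp)
  have hassoc : Associated h A.charpoly :=
    associated_of_dvd_of_natDegree_le (hdvd.trans A.minpoly_dvd_charpoly)
      A.charpoly_monic.ne_zero hdeg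
  exact hassoc.irreducible hh

end Irreducibility

section Companion

variable {F : Type} [Field F]

theorem companionMat_eq_leftMulMatrix {S : Type*} [Ring S] [Algebra F S] (pb : PowerBasis F S) :
    companionMat pb.dim (minpoly F pb.gen) = Algebra.leftMulMatrix pb.basis pb.gen := by
  rw [PowerBasis.leftMulMatrix, pb.minpolyGen_eq]
  ext i j
  have hlast : (j : ℕ) = pb.dim - 1 ↔ (j : ℕ) + 1 = pb.dim := by lia
  simp only [companionMat, of_apply, hlast]

theorem charpoly_companionMat {f : F[X]} (hf : f.Monic) :
    (companionMat f.natDegree f).charpoly = f := by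
  let pb := AdjoinRoot.powerBasis hf.ne_zero
  have hmin : minpoly F pb.gen = f := AdjoinRoot.minpoly_powerBasis_gen_of_monic hf
  calc (companionMat f.natDegree f).charpoly
    _ = (companionMat pb.dim (minpoly F pb.gen)).charpoly := by
      rw [hmin, AdjoinRoot.powerBasis_dim]
    _ = minpoly F pb.gen := by rw [companionMat_eq_leftMulMatrix, charpoly_leftMulMatrix]
    _ = f := hmin

theorem ConjGL.charpoly_eq {m : Type} [Fintype m] [DecidableEq m] {A B : Matrix m m F}
    (h : ConjGL A B) : A.charpoly = B.charpoly := by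
  obtain ⟨_, ⟨P, rfl⟩, rfl⟩ := h
  exact (charpoly_units_conj P A).symm

end Companion

section Unitary

theorem charpoly_coeff_zero_eq_sign_mul_det {R m : Type*} [CommRing R] [Fintype m] [DecidableEq m]
    (A : Matrix m m R) : A.charpoly.coeff 0 = (-1) ^ Fintype.card m * A.det := by
  rw [det_eq_sign_charpoly_coeff, ← mul_assoc, ← mul_pow, neg_one_mul, neg_neg, one_pow, one_mul]

variable {F : Type} [Field F] {σ : F →+* F}

theorem tildePoly_charpoly {m : Type*} [Fintype m] [DecidableEq m] {A : Matrix m m F}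
    (hA : IsUnit A) : tildePoly σ A.charpoly = ((A.map σ)⁻¹).charpoly := by
  have hdet : (A.map σ).det = σ A.det := (σ.map_det A).symm
  have hunit : IsUnit (A.map σ) := hA.map σ.mapMatrix
  rw [charpoly_inv _ hunit, ← reverse_charpoly, charpoly_map, tildePoly,
    charpoly_coeff_zero_eq_sign_mul_det, hdet]
  congr 1
  simp [Ring.inverse_eq_inv, ← inv_pow, inv_neg, mul_comm]

theorem antidiagMat_eq_permMatrix (n : ℕ) :
    antidiagMat F n = (Fin.revPerm : Equiv.Perm (Fin n)).permMatrix F := by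
  ext i j
  have hrev : (i : ℕ) + j = n - 1 ↔ i.rev = j := by
    rw [Fin.ext_iff, Fin.val_rev]
    lia
  simp [antidiagMat, Equiv.Perm.permMatrix, PEquiv.toMatrix_apply, hrev]

theorem isUnit_antidiagMat (n : ℕ) : IsUnit (antidiagMat F n) := by
  rw [isUnit_iff_isUnit_det, antidiagMat_eq_permMatrix, det_permutation]
  exact (Equiv.Perm.sign _).isUnit.map (Int.castRingHom F)

namespace IsUnitaryMat

variable {n : ℕ} {A : Matrix (Fin n) (Fin n) F}

theorem charpoly_eq_charpoly_map_inv (hA : IsUnitaryMat σ A) :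
    A.charpoly = ((A.map σ)⁻¹).charpoly := by
  obtain ⟨Λ, hΛ⟩ := isUnit_antidiagMat (F := F) n
  have hform : A * Λ.val * (A.map σ)ᵀ = Λ.val := by
    rw [hΛ]
    exact hA.2
  have hsimilar : Λ.val⁻¹ * A * Λ.val = ((A.map σ)⁻¹)ᵀ := by
    rw [transpose_nonsing_inv]
    refine (inv_eq_left_inv ?_).symm
    rw [mul_assoc, mul_assoc, ← mul_assoc A, hform]
    exact nonsing_inv_mul _ ((isUnit_iff_isUnit_det _).mp Λ.isUnit)
  rw [← charpoly_transpose (A.map σ)⁻¹, ← hsimilar, charpoly_units_conj']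

theorem isSCIM_charpoly (hA : IsUnitaryMat σ A) (hirr : Irreducible A.charpoly) :
    IsSCIM σ A.charpoly := by
  have hdet : A.det ≠ 0 := ((isUnit_iff_isUnit_det A).mp hA.1).ne_zero
  refine ⟨A.charpoly_monic, hirr, ?_, ?_⟩
  · rw [charpoly_coeff_zero_eq_sign_mul_det]
    exact mul_ne_zero (pow_ne_zero _ (neg_ne_zero.mpr one_ne_zero)) hdet
  · rw [tildePoly_charpoly hA.1, ← hA.charpoly_eq_charpoly_map_inv]

end IsUnitaryMat

end Unitary

theorem statement4_general {F : Type} [Field F] {σ : F →+* F} {f r : F[X]} {d : ℕ}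
    (hmonic : f.Monic) (hirr : Irreducible f) (hfd : f.natDegree = d)
    {α : Matrix (Fin d) (Fin d) F} (hα : IsUnitaryMat σ α)
    (hconj : ConjGL (aeval α r) (companionMat d f)) :
    ∃ g : F[X], IsSCIM σ g ∧ g.natDegree = d ∧ g ∣ f.comp r := by
  subst hfd
  have hcharpoly : (aeval α r).charpoly = f := by
    rw [hconj.charpoly_eq, charpoly_companionMat hmonic]
  have hαirr : Irreducible α.charpoly :=
    irreducible_charpoly_of_irreducible_charpoly_aeval (hcharpoly.symm ▸ hirr)
  have hroot : aeval α (f.comp r) = 0 := by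
    simpa only [hcharpoly] using aeval_charpoly_aeval_comp_self α r
  exact ⟨α.charpoly, hα.isSCIM_charpoly hαirr, by simp,
    charpoly_dvd_of_irreducible_of_aeval_eq_zero hαirr hroot⟩

/-- if the companion matrix of a SCIM polynomial `f` of odd degree `d` has an
`M`-th root in `U(d,q²)` (up to conjugacy), then `f(x^M)` has a SCIM factor of degree `d`. -/
theorem statement4 (p ℓ q : ℕ) (hp : p.Prime) (hℓ : 0 < ℓ) (hq : q = p ^ ℓ)
    (F : Type) [Field F] [Fintype F] (hF : Fintype.card F = q ^ 2)
    (σ : F →+* F) (hσ : ∀ x : F, σ x = x ^ q)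
    (M : ℕ) (hM : 2 ≤ M) (d : ℕ) (hd : 1 ≤ d) (hodd : Odd d)
    (f : F[X]) (hf : IsSCIM σ f) (hfd : f.natDegree = d)
    (α : Matrix (Fin d) (Fin d) F) (hα : IsUnitaryMat σ α)
    (hconj : ConjGL (α ^ M) (companionMat d f)) :
    ∃ g : F[X], IsSCIM σ g ∧ g.natDegree = d ∧ g ∣ f.comp (X ^ M) := by
  exact statement4_general (r := X ^ M) hf.1 hf.2.1 hfd hα (by simpa using hconj)
end
end

section
/- Let p be a prime, q a power of p, M ≥ 2 an integer, and f a SCIM polynomial of odd degree d over F_{q^2} such that f(x^M) has a SCIM factor g of degree d. Then C_g^M is conjugate in GL(d, F_{q^2}) to C_f; consequently there exists α ∈ U(d,q²) with α^M conjugate to C_f. -/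
open Polynomial Matrix

noncomputable section

/-!
Let `A` be a `d × d` matrix annihilated by a monic irreducible `f` of degree `d`. For every `v ≠ 0`
the vectors `v, A v, …, A ^ (d - 1) v` form a basis, in which `A` becomes `C_f`. Applied to
`A = C_g ^ M`, which is annihilated by `f` because `g ∣ f(x ^ M)`, this is the first claim.

The `M`-th root is a unitary matrix similar to `A = C_g`. Since `g̃ = g`, both `A` and `(Aᴴ)⁻¹` are
annihilated by `g`, hence they are similar, and a matrix conjugating one into the other is the Gram
matrix `Q` of a nonzero `A`-invariant sesquilinear form. Some `e • Q + (e • Q)ᴴ` is still nonzero;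
its kernel is `A`-invariant, hence trivial, so it is an invariant nondegenerate Hermitian form.
As every fixed element of the involution is a norm, all such forms admit orthonormal bases, so
this one is congruent to `Λ_d`, and the congruence carries `A` into the unitary group.
-/

section PolynomialEvaluation

lemma isUnit_of_aeval_eq_zero {R A : Type*} [CommRing R] [Ring A] [Algebra R A] {a : A} {p : R[X]}
    (hp : IsUnit (p.coeff 0)) (ha : aeval a p = 0) : IsUnit a := by
  have hsplit : aeval a p.divX * a = -algebraMap R A (p.coeff 0) := by
    have h := congrArg (aeval a) (divX_mul_X_add p)
    rw [map_add, map_mul, aeval_X, aeval_C, ha] at h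
    exact eq_neg_of_add_eq_zero_left h
  have hcomm : Commute (aeval a p.divX) a := by
    simpa only [aeval_X] using (commute_X p.divX).symm.map (aeval (R := R) a)
  exact (hcomm.isUnit_mul_iff.mp (hsplit ▸ (hp.map (algebraMap R A)).neg)).2

lemma aeval_reverse_of_mul_eq_one {R A : Type*} [CommSemiring R] [Semiring A] [Algebra R A]
    {a b : A} (hba : b * a = 1) (p : R[X]) :
    aeval b p.reverse = b ^ p.natDegree * aeval a p := by
  rw [aeval_eq_sum_range' (Nat.lt_succ_of_le (reverse_natDegree_le p)), aeval_eq_sum_range,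
    Finset.mul_sum, ← Finset.sum_range_reflect]
  refine Finset.sum_congr rfl fun i hi => ?_
  have hi : i ≤ p.natDegree := Nat.lt_succ_iff.mp (Finset.mem_range.mp hi)
  have hpow : b ^ p.natDegree * a ^ i = b ^ (p.natDegree - i) := by
    rw [← Nat.sub_add_cancel hi, pow_add, mul_assoc, pow_mul_pow_eq_one i hba, mul_one,
      Nat.sub_add_cancel hi]
  rw [Nat.succ_sub_one, coeff_reverse, revAt_le (Nat.sub_le _ _), Nat.sub_sub_self hi,
    mul_smul_comm, hpow]

lemma aeval_star_map_starRingEnd {R A : Type*} [CommSemiring R] [StarRing R] [Semiring A]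
    [StarRing A] [Algebra R A] [StarModule R A] (a : A) (p : R[X]) :
    aeval (star a) (p.map (starRingEnd R)) = star (aeval a p) := by
  induction p using Polynomial.induction_on' with
  | add p q hp hq => simp only [Polynomial.map_add, map_add, star_add, hp, hq]
  | monomial n r =>
    simp only [map_monomial, aeval_monomial, star_mul, star_pow, starRingEnd_apply,
      ← algebraMap_star_comm]
    exact Algebra.commutes (star r) (star a ^ n)

lemma IsSCIM.aeval_eq_zero_of_mul_star_eq_one {F : Type} {A : Type*} [Field F] [StarRing F]
    [Semiring A] [StarRing A] [Algebra F A] [StarModule F A] {g : F[X]}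
    (hg : IsSCIM (starRingEnd F) g) {a b : A} (hba : b * star a = 1) (ha : aeval a g = 0) :
    aeval b g = 0 := by
  rw [← hg.2.2.2, tildePoly, map_mul, aeval_reverse_of_mul_eq_one hba,
    aeval_star_map_starRingEnd, ha, star_zero, mul_zero, mul_zero]

end PolynomialEvaluation

section IrreducibleAnnihilator

variable {F V : Type*} [Field F] [AddCommGroup V] [Module F V] {φ : Module.End F V} {f : F[X]}

lemma dvd_of_aeval_apply_eq_zero (hf : Irreducible f) (hφ : aeval φ f = 0) {v : V} (hv : v ≠ 0)
    {p : F[X]} (hp : aeval φ p v = 0) : f ∣ p := by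
  by_contra hfp
  obtain ⟨a, b, hab⟩ := (hf.coprime_iff_not_dvd).mpr hfp
  apply hv
  calc v = aeval φ (a * f + b * p) v := by rw [hab, map_one, Module.End.one_apply]
    _ = 0 := by
      rw [map_add, map_mul, map_mul, hφ, mul_zero, zero_add, Module.End.mul_apply, hp, map_zero]

lemma linearIndependent_pow_apply (hf : Irreducible f) (hφ : aeval φ f = 0) {v : V} (hv : v ≠ 0) :
    LinearIndependent F fun i : Fin f.natDegree => (φ ^ (i : ℕ)) v := by
  rw [Fintype.linearIndependent_iff]
  intro c hc i
  set p : F[X] := ∑ j : Fin f.natDegree, C (c j) * X ^ (j : ℕ) with hp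
  have hpv : aeval φ p v = 0 := by
    rw [← hc, hp]
    simp [LinearMap.sum_apply, Module.algebraMap_end_apply]
  have hp0 : p = 0 := eq_zero_of_dvd_of_degree_lt (dvd_of_aeval_apply_eq_zero hf hφ hv hpv)
    ((degree_sum_fin_lt c).trans_eq (degree_eq_natDegree hf.ne_zero).symm)
  calc c i = p.coeff i := by simp [hp, finsetSum_coeff, coeff_X_pow, Fin.val_inj]
    _ = 0 := by rw [hp0, coeff_zero]

lemma eq_bot_or_eq_top_of_mem_invtSubmodule (hf : Irreducible f) (hφ : aeval φ f = 0)
    (hV : Module.finrank F V = f.natDegree) {W : Submodule F V} (hW : W ∈ φ.invtSubmodule) :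
    W = ⊥ ∨ W = ⊤ := by
  refine or_iff_not_imp_left.mpr fun hbot => ?_
  have : FiniteDimensional F V := .of_finrank_pos (hV ▸ hf.natDegree_pos)
  obtain ⟨v, hvW, hv⟩ := (Submodule.ne_bot_iff W).mp hbot
  have hpow (i : ℕ) : (φ ^ i) v ∈ W := by
    rw [Module.End.pow_apply]
    exact Set.MapsTo.iterate hW i hvW
  rw [eq_top_iff, ← (linearIndependent_pow_apply hf hφ hv).span_eq_top_of_card_eq_finrank'
    ((Fintype.card_fin _).trans hV.symm), Submodule.span_le]
  exact Set.range_subset_iff.mpr fun i => hpow i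

end IrreducibleAnnihilator

section CompanionMatrix

variable {F : Type} [Field F] {d : ℕ} {f : F[X]}

lemma aeval_companionMat (hf : f.Monic) (hfd : f.natDegree = d) :
    aeval (companionMat d f) f = 0 := by
  subst hfd
  have hminpoly : (AdjoinRoot.powerBasis' hf).minpolyGen = f := by
    rw [PowerBasis.minpolyGen_eq, AdjoinRoot.powerBasis'_gen, AdjoinRoot.minpoly_root hf.ne_zero,
      hf.leadingCoeff, inv_one, C_1, mul_one]
  let b : Module.Basis (Fin f.natDegree) F (AdjoinRoot f) := (AdjoinRoot.powerBasis' hf).basis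
  have hmul : companionMat f.natDegree f = Algebra.leftMulMatrix b (AdjoinRoot.root f) := by
    refine Eq.trans ?_ (AdjoinRoot.powerBasis' hf).leftMulMatrix.symm
    rw [hminpoly]
    ext i j
    have hlast : (j : ℕ) = f.natDegree - 1 ↔ (j : ℕ) + 1 = f.natDegree := by omega
    simp only [companionMat, of_apply, hlast]
    rfl
  rw [hmul, aeval_algHom_apply, AdjoinRoot.aeval_eq, AdjoinRoot.mk_self, map_zero]

lemma sum_companionMat_smul_pow_apply {V : Type*} [AddCommGroup V] [Module F V]
    {φ : Module.End F V} (hf : f.Monic) (hfd : f.natDegree = d) (hφ : aeval φ f = 0) (v : V)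
    (j : Fin d) :
    ∑ i : Fin d, companionMat d f i j • (φ ^ (i : ℕ)) v = (φ ^ ((j : ℕ) + 1)) v := by
  by_cases hj : (j : ℕ) + 1 = d
  · have hlast : (j : ℕ) = d - 1 := by omega
    have hroot : ∑ i : Fin d, f.coeff i • (φ ^ (i : ℕ)) v + (φ ^ d) v = 0 := by
      have h := LinearMap.congr_fun hφ v
      rw [aeval_eq_sum_range, Finset.sum_range_succ, hf.coeff_natDegree, hfd, one_smul,
        Finset.sum_range] at h
      simpa only [LinearMap.add_apply, LinearMap.sum_apply, LinearMap.smul_apply,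
        LinearMap.zero_apply] using h
    simp only [companionMat, of_apply, if_pos hlast, neg_smul, Finset.sum_neg_distrib]
    rw [hj, eq_neg_of_add_eq_zero_right hroot]
  · have hlast : (j : ℕ) ≠ d - 1 := by omega
    rw [Finset.sum_eq_single (⟨j + 1, by omega⟩ : Fin d)]
    · simp [companionMat, hlast]
    · intro i _ hi
      have hval : (i : ℕ) ≠ j + 1 := fun h => hi (Fin.ext h)
      simp [companionMat, hlast, hval]
    · simp

lemma exists_basis_toMatrix_eq_companionMat {V : Type*} [AddCommGroup V] [Module F V]
    {φ : Module.End F V} (hf : f.Monic) (hfi : Irreducible f) (hfd : f.natDegree = d)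
    (hV : Module.finrank F V = d) (hφ : aeval φ f = 0) :
    ∃ b : Module.Basis (Fin d) F V, LinearMap.toMatrix b b φ = companionMat d f := by
  subst hfd
  have : Nontrivial V := Module.nontrivial_of_finrank_pos (R := F) (hV ▸ hfi.natDegree_pos)
  have : Nonempty (Fin f.natDegree) := ⟨⟨0, hfi.natDegree_pos⟩⟩
  obtain ⟨v, hv⟩ := exists_ne (0 : V)
  let b := basisOfLinearIndependentOfCardEqFinrank (linearIndependent_pow_apply hfi hφ hv)
    ((Fintype.card_fin _).trans hV.symm)
  have hb (i : Fin f.natDegree) : b i = (φ ^ (i : ℕ)) v := by simp [b]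
  refine ⟨b, ?_⟩
  rw [← LinearEquiv.eq_symm_apply, LinearMap.toMatrix_symm]
  refine b.ext fun j => ?_
  rw [toLin_self]
  simp only [hb, sum_companionMat_smul_pow_apply hf rfl hφ, pow_succ', Module.End.mul_apply]

end CompanionMatrix

section Similarity

variable {F : Type} [Field F] {m : Type} [Fintype m] [DecidableEq m] {A B C : Matrix m m F}

lemma ConjGL.symm (h : ConjGL A B) : ConjGL B A := by
  obtain ⟨P, hP, rfl⟩ := h
  have hdet := (isUnit_iff_isUnit_det P).mp hP
  refine ⟨P⁻¹, isUnit_nonsing_inv_iff.mpr hP, ?_⟩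
  simp only [nonsing_inv_nonsing_inv P hdet, mul_assoc, nonsing_inv_mul P hdet, mul_one,
    nonsing_inv_mul_cancel_left P _ hdet]

lemma ConjGL.trans (hAB : ConjGL A B) (hBC : ConjGL B C) : ConjGL A C := by
  obtain ⟨P, hP, rfl⟩ := hAB
  obtain ⟨Q, hQ, rfl⟩ := hBC
  exact ⟨Q * P, hQ.mul hP, by simp only [Matrix.mul_inv_rev, mul_assoc]⟩

lemma ConjGL.pow (h : ConjGL A B) (n : ℕ) : ConjGL (A ^ n) (B ^ n) := by
  obtain ⟨P, hP, rfl⟩ := h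
  refine ⟨P, hP, ?_⟩
  obtain ⟨u, rfl⟩ := hP
  rw [← coe_units_inv, Units.conj_pow]

lemma conjGL_toMatrix {V : Type*} [AddCommGroup V] [Module F V] (b c : Module.Basis m F V)
    (φ : Module.End F V) : ConjGL (LinearMap.toMatrix b b φ) (LinearMap.toMatrix c c φ) := by
  refine ⟨c.toMatrix b, IsUnit.of_mul_eq_one _ (c.toMatrix_mul_toMatrix_flip b), ?_⟩
  rw [inv_eq_right_inv (c.toMatrix_mul_toMatrix_flip b),
    basis_toMatrix_mul_linearMap_toMatrix_mul_basis_toMatrix]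

lemma conjGL_companionMat_of_aeval_eq_zero {d : ℕ} {A : Matrix (Fin d) (Fin d) F} {f : F[X]}
    (hf : f.Monic) (hfi : Irreducible f) (hfd : f.natDegree = d) (hA : aeval A f = 0) :
    ConjGL A (companionMat d f) := by
  have hφ : aeval (toLinAlgEquiv' A) f = 0 := by rw [aeval_algHom_apply, hA, map_zero]
  obtain ⟨b, hb⟩ := exists_basis_toMatrix_eq_companionMat hf hfi hfd (Module.finrank_fin_fun F) hφ
  have hstd : LinearMap.toMatrix (Pi.basisFun F (Fin d)) (Pi.basisFun F (Fin d))
      (toLinAlgEquiv' A) = A := LinearMap.toMatrix'_toLin' A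
  simpa only [hstd, hb] using conjGL_toMatrix (Pi.basisFun F (Fin d)) b (toLinAlgEquiv' A)

lemma conjGL_companionMat_pow {d M : ℕ} {f g : F[X]} (hf : f.Monic) (hfi : Irreducible f)
    (hfd : f.natDegree = d) (hg : g.Monic) (hgd : g.natDegree = d)
    (hdvd : g ∣ f.comp (X ^ M)) : ConjGL (companionMat d g ^ M) (companionMat d f) := by
  have hroot : aeval (companionMat d g) (f.comp (X ^ M)) = 0 :=
    aeval_eq_zero_of_dvd_aeval_eq_zero hdvd (aeval_companionMat hg hgd)
  rw [aeval_comp, map_pow, aeval_X] at hroot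
  exact conjGL_companionMat_of_aeval_eq_zero hf hfi hfd hroot

end Similarity

section HermitianForms

variable {F : Type*} [Field F] [StarRing F]

lemma exists_smul_add_star_smul_ne_zero {E : Type*} [AddCommGroup E] [StarAddMonoid E] [Module F E]
    [StarModule F E] (hstar : ∃ e : F, star e ≠ e) {x : E} (hx : x ≠ 0) :
    ∃ e : F, e • x + star (e • x) ≠ 0 := by
  by_contra! h
  obtain ⟨e, he⟩ := hstar
  have hskew : star x = -x := by
    have h1 := h 1
    rw [one_smul] at h1
    exact eq_neg_of_add_eq_zero_right h1
  have hsub : (e - star e) • x = 0 := by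
    rw [sub_smul, sub_eq_add_neg, ← smul_neg, ← hskew, ← star_smul, h e]
  exact (smul_ne_zero (sub_ne_zero.mpr he.symm) hx) hsub

variable {V : Type*} [AddCommGroup V] [Module F V] {B : V →ₗ⋆[F] V →ₗ[F] F}

lemma exists_apply_self_ne_zero (hstar : ∃ e : F, star e ≠ e) (hB : B ≠ 0) :
    ∃ x, B x x ≠ 0 := by
  by_contra! halt
  apply hB
  ext x y
  obtain ⟨e, he⟩ := hstar
  have hskew : B y x = -B x y := (LinearMap.IsAlt.neg halt x y).symm
  have hscaled : (e - star e) * B x y = 0 := by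
    have h := halt (x + e • y)
    simp only [map_add, map_smulₛₗ, LinearMap.add_apply, LinearMap.smul_apply, smul_eq_mul,
      RingHom.id_apply, starRingEnd_apply, halt x, halt y, hskew] at h
    linear_combination h
  exact (mul_eq_zero.mp hscaled).resolve_left (sub_ne_zero.mpr he.symm)

lemma exists_apply_self_eq_one (hstar : ∃ e : F, star e ≠ e)
    (hnorm : ∀ a : F, star a = a → ∃ c, star c * c = a) (hsymm : B.IsSymm) (hB : B ≠ 0) :
    ∃ x, B x x = 1 := by
  obtain ⟨x, hx⟩ := exists_apply_self_ne_zero hstar hB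
  obtain ⟨c, hc⟩ := hnorm (B x x)⁻¹ (by rw [star_inv₀]; exact congrArg _ (hsymm.eq x x))
  refine ⟨c • x, ?_⟩
  simp only [map_smulₛₗ, LinearMap.smul_apply, smul_eq_mul, RingHom.id_apply, starRingEnd_apply]
  rw [← mul_assoc, mul_comm c, hc, inv_mul_cancel₀ hx]

lemma separatingLeft_domRestrict_ker (hsymm : B.IsSymm) (hsep : B.SeparatingLeft) {x : V}
    (hx : B x x = 1) :
    (B.domRestrict₁₂ (LinearMap.ker (B x)) (LinearMap.ker (B x))).SeparatingLeft := by
  rintro ⟨y, hy⟩ hyker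
  have hyx : B y x = 0 := hsymm.eq_iff.mp hy
  refine Subtype.ext (hsep y fun z => ?_)
  have hz : z - B x z • x ∈ LinearMap.ker (B x) := by simp [hx]
  have hyz : B y (z - B x z • x) = 0 := hyker ⟨_, hz⟩
  simpa [hyx] using hyz

theorem exists_orthonormal_basis [FiniteDimensional F V] (hstar : ∃ e : F, star e ≠ e)
    (hnorm : ∀ a : F, star a = a → ∃ c, star c * c = a) (hsymm : B.IsSymm)
    (hsep : B.SeparatingLeft) {n : ℕ} (hn : Module.finrank F V = n) :
    ∃ b : Module.Basis (Fin n) F V, ∀ i j, B (b i) (b j) = if i = j then 1 else 0 := by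
  induction n generalizing V with
  | zero =>
    exact ⟨Module.finBasisOfFinrankEq F V hn, fun i => i.elim0⟩
  | succ n ih =>
    have : Nontrivial V := Module.nontrivial_of_finrank_pos (R := F) (hn ▸ n.succ_pos)
    have hB : B ≠ 0 := by
      rintro rfl
      obtain ⟨v, hv⟩ := exists_ne (0 : V)
      exact hv (hsep v fun _ => rfl)
    obtain ⟨x, hx⟩ := exists_apply_self_eq_one hstar hnorm hsymm hB
    have hBx : B x ≠ 0 := fun h => one_ne_zero (hx.symm.trans (LinearMap.congr_fun h x))
    have hker : Module.finrank F (LinearMap.ker (B x)) = n :=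
      Nat.succ_injective ((Module.Dual.finrank_ker_add_one_of_ne_zero hBx).trans hn)
    obtain ⟨b, hb⟩ := ih (hsymm.domRestrict _) (separatingLeft_domRestrict_ker hsymm hsep hx) hker
    have hxb (j : Fin n) : B x (b j) = 0 := (b j).2
    refine ⟨Module.Basis.mkFinCons x b ?_ ?_, fun i j => ?_⟩
    · intro c y hy hcy
      have h := congrArg (B x) hcy
      rwa [map_add, map_smul, hx, LinearMap.mem_ker.mp hy, map_zero, add_zero, smul_eq_mul,
        mul_one] at h
    · exact fun z => ⟨-B x z, by simp [hx]⟩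
    · rw [Module.Basis.coe_mkFinCons]
      cases i using Fin.cases with
      | zero =>
        cases j using Fin.cases with
        | zero => simpa using hx
        | succ j => simp [(Fin.succ_ne_zero j).symm]
      | succ i =>
        cases j using Fin.cases with
        | zero => simpa using hsymm.eq_iff.mp (hxb i)
        | succ j => simpa [LinearMap.domRestrict₁₂_apply] using hb i j

end HermitianForms

section HermitianMatrices

variable {F : Type*} [Field F] [StarRing F] {n : ℕ}

lemma toLinearMapₛₗ₂'_starRingEnd_apply {m : Type*} [Fintype m] [DecidableEq m]
    (H : Matrix m m F) (x y : m → F) :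
    toLinearMapₛₗ₂' F (starRingEnd F) (RingHom.id F) H x y = star x ⬝ᵥ H *ᵥ y := by
  simp only [toLinearMapₛₗ₂'_apply, dotProduct, mulVec, Finset.mul_sum, Pi.star_apply,
    starRingEnd_apply, RingHom.id_apply, smul_eq_mul]
  exact Finset.sum_congr rfl fun i _ => Finset.sum_congr rfl fun j _ => by ring

lemma exists_conjTranspose_mul_mul_eq_one (hstar : ∃ e : F, star e ≠ e)
    (hnorm : ∀ a : F, star a = a → ∃ c, star c * c = a) {H : Matrix (Fin n) (Fin n) F}
    (hH : H.IsHermitian) (hu : IsUnit H) : ∃ P, Pᴴ * H * P = 1 := by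
  let B := toLinearMapₛₗ₂' F (starRingEnd F) (RingHom.id F) H
  have hB (x y : Fin n → F) : B x y = star x ⬝ᵥ H *ᵥ y := toLinearMapₛₗ₂'_starRingEnd_apply H x y
  have hsymm : B.IsSymm := ⟨fun x y => by
    rw [hB, hB, starRingEnd_apply, star_dotProduct, star_star, star_mulVec, hH.eq,
      ← dotProduct_mulVec]⟩
  have hsep : B.SeparatingLeft := by
    intro x hx
    refine star_eq_zero.mp (dotProduct_eq_zero _ fun w => ?_)
    obtain ⟨y, rfl⟩ := mulVec_surjective_iff_isUnit.mpr hu w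
    exact (hB x y).symm.trans (hx y)
  obtain ⟨b, hb⟩ := exists_orthonormal_basis hstar hnorm hsymm hsep (Module.finrank_fin_fun F)
  refine ⟨of fun i j => b j i, ?_⟩
  ext i j
  rw [one_apply, ← hb i j, hB, mul_assoc]
  simp only [mul_apply, dotProduct, mulVec, conjTranspose_apply, of_apply, Pi.star_apply]

lemma exists_conjTranspose_mul_mul_eq (hstar : ∃ e : F, star e ≠ e)
    (hnorm : ∀ a : F, star a = a → ∃ c, star c * c = a) {H K : Matrix (Fin n) (Fin n) F}
    (hH : H.IsHermitian) (hHu : IsUnit H) (hK : K.IsHermitian) (hKu : IsUnit K) :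
    ∃ P, IsUnit P ∧ Pᴴ * H * P = K := by
  obtain ⟨P, hP⟩ := exists_conjTranspose_mul_mul_eq_one hstar hnorm hH hHu
  obtain ⟨Q, hQ⟩ := exists_conjTranspose_mul_mul_eq_one hstar hnorm hK hKu
  have hPu : IsUnit P := IsUnit.of_mul_eq_one_right _ hP
  have hQu : IsUnit Q := IsUnit.of_mul_eq_one_right _ hQ
  have hQinv : Q * Q⁻¹ = 1 := mul_nonsing_inv Q ((isUnit_iff_isUnit_det Q).mp hQu)
  have hQinv' : (Q⁻¹)ᴴ * Qᴴ = 1 := by rw [← conjTranspose_mul, hQinv, conjTranspose_one]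
  refine ⟨P * Q⁻¹, hPu.mul (isUnit_nonsing_inv_iff.mpr hQu), ?_⟩
  calc (P * Q⁻¹)ᴴ * H * (P * Q⁻¹) = (Q⁻¹)ᴴ * (Pᴴ * H * P) * Q⁻¹ := by
        simp only [conjTranspose_mul, mul_assoc]
    _ = (Q⁻¹)ᴴ * (Qᴴ * K * Q) * Q⁻¹ := by rw [hP, hQ]
    _ = ((Q⁻¹)ᴴ * Qᴴ) * K * (Q * Q⁻¹) := by simp only [mul_assoc]
    _ = K := by rw [hQinv, hQinv', one_mul, mul_one]

end HermitianMatrices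

section InvariantForms

variable {F : Type} [Field F] [StarRing F] {d : ℕ} {g : F[X]} {A H : Matrix (Fin d) (Fin d) F}

lemma isUnit_of_conjTranspose_mul_mul_eq_self (hg : Irreducible g) (hgd : g.natDegree = d)
    (hA : aeval A g = 0) (hAu : IsUnit A) (hH : H ≠ 0) (hHA : Aᴴ * H * A = H) : IsUnit H := by
  have hφ : aeval (toLinAlgEquiv' A) g = 0 := by rw [aeval_algHom_apply, hA, map_zero]
  have hinv : LinearMap.ker (toLin' H) ∈ Module.End.invtSubmodule (toLinAlgEquiv' A) := by
    intro v hv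
    have hAHA : Aᴴ *ᵥ (H *ᵥ (A *ᵥ v)) = Aᴴ *ᵥ 0 := by
      rw [mulVec_mulVec, mulVec_mulVec, hHA, mulVec_zero]
      exact hv
    exact mulVec_injective_iff_isUnit.mpr hAu.star hAHA
  obtain hbot | htop := eq_bot_or_eq_top_of_mem_invtSubmodule hg hφ
    ((Module.finrank_fin_fun F).trans hgd.symm) hinv
  · exact mulVec_injective_iff_isUnit.mp (LinearMap.ker_eq_bot.mp hbot)
  · exact absurd (toLin'.map_eq_zero_iff.mp (LinearMap.ker_eq_top.mp htop)) hH

lemma IsSCIM.exists_ne_zero_conjTranspose_mul_mul_eq_self (hg : IsSCIM (starRingEnd F) g)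
    (hgd : g.natDegree = d) (hA : aeval A g = 0) : ∃ Q ≠ 0, Aᴴ * Q * A = Q := by
  have hAu : IsUnit A := isUnit_of_aeval_eq_zero (isUnit_iff_ne_zero.mpr hg.2.2.1) hA
  have hdet := (isUnit_iff_isUnit_det Aᴴ).mp hAu.star
  have hdual : aeval (Aᴴ)⁻¹ g = 0 :=
    hg.aeval_eq_zero_of_mul_star_eq_one (nonsing_inv_mul Aᴴ hdet) hA
  obtain ⟨P, hP, hPA⟩ := (conjGL_companionMat_of_aeval_eq_zero hg.1 hg.2.1 hgd hA).trans
    (conjGL_companionMat_of_aeval_eq_zero hg.1 hg.2.1 hgd hdual).symm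
  have : Nonempty (Fin d) := ⟨⟨0, hgd ▸ hg.2.1.natDegree_pos⟩⟩
  refine ⟨P, hP.ne_zero, ?_⟩
  have hPA' : P * A = (Aᴴ)⁻¹ * P := by
    rw [hPA, nonsing_inv_mul_cancel_right _ _ ((isUnit_iff_isUnit_det P).mp hP)]
  rw [mul_assoc, hPA', mul_nonsing_inv_cancel_left _ _ hdet]

lemma IsSCIM.exists_isHermitian_conjTranspose_mul_mul_eq_self (hstar : ∃ e : F, star e ≠ e)
    (hg : IsSCIM (starRingEnd F) g) (hgd : g.natDegree = d) (hA : aeval A g = 0) :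
    ∃ H : Matrix (Fin d) (Fin d) F, H.IsHermitian ∧ IsUnit H ∧ Aᴴ * H * A = H := by
  have hAu : IsUnit A := isUnit_of_aeval_eq_zero (isUnit_iff_ne_zero.mpr hg.2.2.1) hA
  obtain ⟨Q, hQ, hQA⟩ := hg.exists_ne_zero_conjTranspose_mul_mul_eq_self hgd hA
  have hQA' : Aᴴ * Qᴴ * A = Qᴴ := by
    simpa only [conjTranspose_mul, conjTranspose_conjTranspose, mul_assoc]
      using congrArg conjTranspose hQA
  obtain ⟨e, he⟩ := exists_smul_add_star_smul_ne_zero hstar hQ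
  have hinv : Aᴴ * (e • Q + star (e • Q)) * A = e • Q + star (e • Q) := by
    simp only [star_smul, star_eq_conjTranspose, mul_add, add_mul, mul_smul_comm, smul_mul_assoc,
      hQA, hQA']
  exact ⟨_, (IsSelfAdjoint.add_star_self (e • Q)).isHermitian,
    isUnit_of_conjTranspose_mul_mul_eq_self hg.2.1 hgd hA hAu he hinv, hinv⟩

end InvariantForms

section UnitaryGroup

variable {F : Type} [Field F]

lemma antidiagMat_mul_self (n : ℕ) : antidiagMat F n * antidiagMat F n = 1 := by
  have hentry (i j : Fin n) : antidiagMat F n i j = if i = j.rev then 1 else 0 := by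
    have hiff : (i : ℕ) + j = n - 1 ↔ i = j.rev := by rw [Fin.ext_iff, Fin.val_rev]; omega
    simp only [antidiagMat, of_apply, hiff]
  ext i j
  simp [mul_apply, hentry, one_apply]

variable [StarRing F] {d : ℕ}

lemma isHermitian_antidiagMat (n : ℕ) : (antidiagMat F n).IsHermitian := by
  ext i j
  simp only [antidiagMat, conjTranspose_apply, of_apply, add_comm (j : ℕ)]
  split_ifs <;> simp

lemma isUnitaryMat_of_conjTranspose_mul_mul_eq {A : Matrix (Fin d) (Fin d) F}
    (hA : Aᴴ * antidiagMat F d * A = antidiagMat F d) : IsUnitaryMat (starRingEnd F) A := by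
  have hleft : Aᴴ * antidiagMat F d * (A * antidiagMat F d) = 1 := by
    rw [← mul_assoc, hA, antidiagMat_mul_self]
  have hright : A * antidiagMat F d * Aᴴ * antidiagMat F d = 1 := by
    rw [mul_assoc _ Aᴴ, mul_eq_one_comm.mp hleft]
  refine ⟨IsUnit.of_mul_eq_one (antidiagMat F d * Aᴴ * antidiagMat F d)
    (by simpa only [mul_assoc] using hright), ?_⟩
  calc A * antidiagMat F d * Aᴴ
      = A * antidiagMat F d * Aᴴ * antidiagMat F d * antidiagMat F d := by
        rw [mul_assoc _ (antidiagMat F d) (antidiagMat F d), antidiagMat_mul_self, mul_one]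
    _ = antidiagMat F d := by rw [hright, one_mul]

theorem IsSCIM.exists_isUnitaryMat_conjGL (hstar : ∃ e : F, star e ≠ e)
    (hnorm : ∀ a : F, star a = a → ∃ c, star c * c = a) {g : F[X]}
    (hg : IsSCIM (starRingEnd F) g) (hgd : g.natDegree = d) {A : Matrix (Fin d) (Fin d) F}
    (hA : aeval A g = 0) : ∃ α, IsUnitaryMat (starRingEnd F) α ∧ ConjGL α A := by
  obtain ⟨H, hH, hHu, hHA⟩ := hg.exists_isHermitian_conjTranspose_mul_mul_eq_self hstar hgd hA
  obtain ⟨P, hP, hPH⟩ := exists_conjTranspose_mul_mul_eq hstar hnorm hH hHu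
    (isHermitian_antidiagMat d) (IsUnit.of_mul_eq_one _ (antidiagMat_mul_self d))
  have hdet := (isUnit_iff_isUnit_det P).mp hP
  have hPinv : P * P⁻¹ = 1 := mul_nonsing_inv P hdet
  have hPinv' : (P⁻¹)ᴴ * Pᴴ = 1 := by rw [← conjTranspose_mul, hPinv, conjTranspose_one]
  refine ⟨P⁻¹ * A * P, isUnitaryMat_of_conjTranspose_mul_mul_eq ?_, P, hP, ?_⟩
  · calc (P⁻¹ * A * P)ᴴ * antidiagMat F d * (P⁻¹ * A * P)
        = Pᴴ * (Aᴴ * (((P⁻¹)ᴴ * Pᴴ) * H * (P * P⁻¹)) * A) * P := by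
          rw [← hPH]
          simp only [conjTranspose_mul, mul_assoc]
      _ = antidiagMat F d := by rw [hPinv, hPinv', one_mul, mul_one, hHA, hPH]
  · rw [mul_assoc P⁻¹, mul_nonsing_inv_cancel_left _ _ hdet,
      mul_nonsing_inv_cancel_right _ _ hdet]

end UnitaryGroup

/-- The star structure on a field whose star is a given involutive endomorphism `σ`. It makes
`starRingEnd F` definitionally equal to `σ`, so that `ᴴ` is the `σ`-conjugate transpose. -/
@[reducible]
def starRingOfInvolutive {F : Type*} [Field F] (σ : F →+* F) (hσ : Function.Involutive σ) :
    StarRing F where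
  star := σ
  star_involutive := hσ
  star_mul x y := by rw [map_mul, mul_comm]
  star_add := map_add σ

section FiniteField

lemma exists_pow_eq_of_pow_eq_one {G : Type*} [CommGroup G] [IsCyclic G] [Finite G] {m n : ℕ}
    (hG : Nat.card G = m * n) {x : G} (hx : x ^ n = 1) : ∃ y : G, y ^ m = x := by
  have hpos : 0 < m * n := hG ▸ Nat.card_pos
  have hle : (powMonoidHom m : G →* G).range ≤ (powMonoidHom n : G →* G).ker := by
    rintro _ ⟨y, rfl⟩
    rw [MonoidHom.mem_ker, powMonoidHom_apply, powMonoidHom_apply, ← pow_mul, ← hG,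
      pow_card_eq_one']
  have hcard :
      Nat.card (powMonoidHom n : G →* G).ker ≤ Nat.card (powMonoidHom m : G →* G).range := by
    rw [IsCyclic.card_powMonoidHom_ker, IsCyclic.card_powMonoidHom_range, hG,
      Nat.gcd_mul_right_left, Nat.gcd_mul_left_left,
      Nat.mul_div_cancel_left n (Nat.pos_of_mul_pos_right hpos)]
  have hxrange : x ∈ (powMonoidHom m : G →* G).range :=
    (Subgroup.eq_of_le_of_card_ge hle hcard).symm ▸ MonoidHom.mem_ker.mpr hx
  exact hxrange

variable {F : Type*} [Field F] [Fintype F] {q : ℕ}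

lemma two_le_of_card_eq_sq (hF : Fintype.card F = q ^ 2) : 2 ≤ q :=
  (one_lt_sq_iff₀ q.zero_le).mp (hF ▸ Fintype.one_lt_card)

lemma exists_pow_ne_self_of_card_eq_sq (hF : Fintype.card F = q ^ 2) : ∃ e : F, e ^ q ≠ e := by
  have hq := two_le_of_card_eq_sq hF
  by_contra! hfix
  have hunits : ∀ u : Fˣ, u ^ (q - 1) = 1 := fun u => by
    rw [← mul_left_inj u, ← pow_succ, Nat.sub_add_cancel (by omega), one_mul]
    exact Units.ext (hfix u)
  have hdvd := (FiniteField.forall_pow_eq_one_iff F (q - 1)).mp hunits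
  have hle := Nat.le_of_dvd (by omega) hdvd
  rw [hF] at hle
  have : q < q ^ 2 := by nlinarith
  omega

lemma exists_pow_mul_self_eq_of_card_eq_sq (hF : Fintype.card F = q ^ 2) {a : F}
    (ha : a ^ q = a) : ∃ c : F, c ^ q * c = a := by
  have hq := two_le_of_card_eq_sq hF
  obtain rfl | ha0 := eq_or_ne a 0
  · exact ⟨0, mul_zero _⟩
  have hcard : Nat.card Fˣ = (q + 1) * (q - 1) := by
    rw [Nat.card_units, Nat.card_eq_fintype_card, hF]
    simpa using Nat.sq_sub_sq q 1
  have hunit : (Units.mk0 a ha0) ^ (q - 1) = 1 := by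
    rw [← mul_left_inj (Units.mk0 a ha0), ← pow_succ, Nat.sub_add_cancel (by omega), one_mul]
    exact Units.ext ha
  obtain ⟨u, hu⟩ := exists_pow_eq_of_pow_eq_one hcard hunit
  refine ⟨u, ?_⟩
  simpa [pow_succ] using congrArg Units.val hu

end FiniteField

theorem statement5_general {F : Type} [Field F] {σ : F →+* F} (hσ : Function.Involutive σ)
    (hfix : ∃ e, σ e ≠ e) (hnorm : ∀ a, σ a = a → ∃ c, σ c * c = a) {M d : ℕ} {f g : F[X]}
    (hf : f.Monic) (hfi : Irreducible f) (hfd : f.natDegree = d) (hg : IsSCIM σ g)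
    (hgd : g.natDegree = d) (hdvd : g ∣ f.comp (X ^ M)) :
    ConjGL (companionMat d g ^ M) (companionMat d f) ∧
      ∃ α : Matrix (Fin d) (Fin d) F, IsUnitaryMat σ α ∧
        ConjGL (α ^ M) (companionMat d f) := by
  let _ := starRingOfInvolutive σ hσ
  have hpow := conjGL_companionMat_pow hf hfi hfd hg.1 hgd hdvd
  obtain ⟨α, hα, hconj⟩ := IsSCIM.exists_isUnitaryMat_conjGL hfix hnorm hg hgd
    (aeval_companionMat hg.1 hgd)
  exact ⟨hpow, α, hα, (hconj.pow M).trans hpow⟩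

/-- if `f` is SCIM of odd degree `d` and `f(x^M)` has a SCIM factor `g` of
degree `d`, then `C_g^M` is conjugate in `GL(d, F_{q^2})` to `C_f`; consequently `C_f` has
an `M`-th root in `U(d,q²)` up to conjugacy. -/
theorem statement5 (p ℓ q : ℕ) (hp : p.Prime) (hℓ : 0 < ℓ) (hq : q = p ^ ℓ)
    (F : Type) [Field F] [Fintype F] (hF : Fintype.card F = q ^ 2)
    (σ : F →+* F) (hσ : ∀ x : F, σ x = x ^ q)
    (M : ℕ) (hM : 2 ≤ M) (d : ℕ) (hd : 1 ≤ d) (hodd : Odd d)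
    (f : F[X]) (hf : IsSCIM σ f) (hfd : f.natDegree = d)
    (g : F[X]) (hg : IsSCIM σ g) (hgd : g.natDegree = d) (hdvd : g ∣ f.comp (X ^ M)) :
    ConjGL (companionMat d g ^ M) (companionMat d f) ∧
      ∃ α : Matrix (Fin d) (Fin d) F, IsUnitaryMat σ α ∧
        ConjGL (α ^ M) (companionMat d f) := by
  have hinv : Function.Involutive σ := fun x => by
    rw [hσ, hσ, ← pow_mul, ← sq, ← hF, FiniteField.pow_card]
  refine statement5_general hinv ?_ ?_ hf.1 hf.2.1 hfd hg hgd hdvd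
  · simpa only [hσ] using exists_pow_ne_self_of_card_eq_sq hF
  · simpa only [hσ] using fun a ha => exists_pow_mul_self_eq_of_card_eq_sq hF ha
end
end

section
/- Let p be a prime, q a power of p, and M ≥ 2 an integer with gcd(M,q) = 1. Let f and g be monic polynomials of degree k over F_{q^2} with nonzero constant term such that U(f,1)^M = C_f^M is conjugate in GL(k, F_{q^2}) to U(g,1) = C_g. Then for every n ≥ 1, U(f,n)^M is conjugate in GL(nk, F_{q^2}) to U(g,n). -/
open Polynomial Matrix

noncomputable section

/-!
Let `N` be the nilpotent shift and `J n a = N + a` the Jordan block with eigenvalue `a`, where `a`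
may lie in any ring; `U(f, n)` is `J n C_f` over the ring of `k × k` matrices. Since `N` and `a`
commute, `J n a ^ M = u * N + a ^ M` with `u = ∑ i < M, J n a ^ i * a ^ (M - 1 - i)`. This `u` is
upper triangular with constant diagonal `M * a ^ (M - 1)`, a unit because `M` and `a` are. The
matrix whose `j`-th column is the `j`-th column of `u ^ (n - 1 - j)` is then invertible, commutes
with `a ^ M` and carries `N` to `u * N`, so it conjugates `J n (a ^ M)` to `J n a ^ M`.
-/

section UpperTriangular

variable {m R : Type*} [Fintype m]

theorem mul_apply_self_of_isUpperTriangular [LinearOrder m] [NonUnitalNonAssocSemiring R]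
    {A B : Matrix m m R} (hA : A.IsUpperTriangular) (hB : B.IsUpperTriangular) (i : m) :
    (A * B) i i = A i i * B i i := by
  rw [mul_apply]
  refine Fintype.sum_eq_single i fun j hj => ?_
  rcases hj.lt_or_gt with hji | hij
  · rw [hA hji, zero_mul]
  · rw [hB hij, mul_zero]

variable [DecidableEq m]

theorem pow_apply_self_of_isUpperTriangular [LinearOrder m] [Semiring R] {A : Matrix m m R}
    (hA : A.IsUpperTriangular) (e : ℕ) (i : m) : (A ^ e) i i = A i i ^ e := by
  induction e with
  | zero => simp
  | succ e ih => rw [pow_succ, mul_apply_self_of_isUpperTriangular (hA.pow e) hA, ih, pow_succ]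

theorem pow_apply_eq_zero_of_lt_add [Semiring R] {A : Matrix m m R} {r : m → ℕ}
    (hA : ∀ i j, r j ≤ r i → A i j = 0) (e : ℕ) {i j : m} (hij : r j < r i + e) :
    (A ^ e) i j = 0 := by
  induction e generalizing j with
  | zero => exact one_apply_ne (by rintro rfl; omega)
  | succ e ih =>
    rw [pow_succ, mul_apply]
    refine Finset.sum_eq_zero fun l _ => ?_
    rcases lt_or_ge (r l) (r i + e) with hl | hl
    · rw [ih hl, zero_mul]
    · rw [hA l j (by omega), mul_zero]

theorem isNilpotent_of_apply_eq_zero_of_le [LinearOrder m] [Semiring R] {A : Matrix m m R}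
    (hA : ∀ i j, j ≤ i → A i j = 0) : IsNilpotent A := by
  let rank := (Fintype.orderIsoFinOfCardEq m rfl).symm
  refine ⟨Fintype.card m, ext fun i j => ?_⟩
  refine pow_apply_eq_zero_of_lt_add (r := fun i => rank i)
    (fun i j hij => hA i j (rank.le_iff_le.1 hij)) _ ?_
  exact (rank j).isLt.trans_le (Nat.le_add_left _ _)

theorem isUnit_of_isUpperTriangular [LinearOrder m] [Ring R] {A : Matrix m m R}
    (hA : A.IsUpperTriangular) (hdiag : ∀ i, IsUnit (A i i)) : IsUnit A := by
  choose d hd using hdiag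
  have hD : IsUnit (diagonal fun i => (d i : R)) :=
    (Pi.isUnit_iff.2 fun i => (d i).isUnit : IsUnit fun i => (d i : R)).map (diagonalRingHom m R)
  let S : Matrix m m R := of fun i j => if j ≤ i then 0 else ↑(d i)⁻¹ * A i j
  have hS : IsNilpotent S := isNilpotent_of_apply_eq_zero_of_le fun i j hij => if_pos hij
  have hA_eq : A = diagonal (fun i => (d i : R)) * (1 + S) := by
    ext i j
    rw [diagonal_mul, Matrix.add_apply]
    rcases lt_trichotomy j i with hji | rfl | hij
    · simp [S, hA hji, hji.le, hji.ne']
    · simp [S, hd]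
    · simp [S, hij.not_ge, hij.ne]
  rw [hA_eq]
  exact hD.mul hS.isUnit_one_add

end UpperTriangular

section JordanBlock

variable {R : Type*} {n : ℕ}

/-- The nilpotent shift matrix, with ones directly above the diagonal: the nilpotent part of a
Jordan block. -/
def superdiagonal (R : Type*) [Zero R] [One R] (n : ℕ) : Matrix (Fin n) (Fin n) R :=
  of fun i j => if (j : ℕ) = i + 1 then 1 else 0

/-- The `n × n` Jordan block with eigenvalue `a`. The ring `R` need not be commutative: over a
matrix ring this is a block matrix such as `U(f, n)`. -/
def jordanBlock [Semiring R] (n : ℕ) (a : R) : Matrix (Fin n) (Fin n) R :=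
  superdiagonal R n + scalar (Fin n) a

/-- The matrix whose `j`-th column is the `j`-th column of `u ^ (n - 1 - j)`; it conjugates the
shift `N` to `u * N` when `u` commutes with `N`. -/
def powColumns [Semiring R] (u : Matrix (Fin n) (Fin n) R) : Matrix (Fin n) (Fin n) R :=
  of fun i j => (u ^ (j.rev : ℕ)) i j

theorem isUpperTriangular_superdiagonal [Zero R] [One R] :
    (superdiagonal R n).IsUpperTriangular := fun i j hij =>
  if_neg (by have : (j : ℕ) < i := hij; omega)

theorem superdiagonal_apply_self [Zero R] [One R] (i : Fin n) : superdiagonal R n i i = 0 :=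
  if_neg (by omega)

section Semiring

variable [Semiring R]

theorem mul_superdiagonal_apply_zero {l : Type*} (A : Matrix l (Fin (n + 1)) R) (i : l) :
    (A * superdiagonal R (n + 1)) i 0 = 0 := by
  simp [mul_apply, superdiagonal]

theorem mul_superdiagonal_apply_succ {l : Type*} (A : Matrix l (Fin (n + 1)) R) (i : l)
    (j : Fin n) : (A * superdiagonal R (n + 1)) i j.succ = A i j.castSucc := by
  rw [mul_apply, Fintype.sum_eq_single j.castSucc]
  · simp [superdiagonal]
  · intro s hs
    have hsj : (s : ℕ) ≠ j := fun h => hs (Fin.ext h)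
    simp [superdiagonal, hsj.symm]

theorem commute_superdiagonal_scalar (a : R) : Commute (superdiagonal R n) (scalar (Fin n) a) := by
  ext i j
  simp [superdiagonal, mul_diagonal, diagonal_mul]

theorem isUpperTriangular_jordanBlock (a : R) : (jordanBlock n a).IsUpperTriangular :=
  isUpperTriangular_superdiagonal.add (blockTriangular_diagonal _)

theorem jordanBlock_apply_self (a : R) (i : Fin n) : jordanBlock n a i i = a := by
  simp [jordanBlock, superdiagonal_apply_self]

theorem mul_powColumns_apply {l : Type*} (A : Matrix l (Fin n) R)
    (u : Matrix (Fin n) (Fin n) R) (i : l) (j : Fin n) :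
    (A * powColumns u) i j = (A * u ^ (j.rev : ℕ)) i j := rfl

theorem semiconjBy_powColumns_superdiagonal {u : Matrix (Fin n) (Fin n) R}
    (hu : Commute u (superdiagonal R n)) :
    SemiconjBy (powColumns u) (superdiagonal R n) (u * superdiagonal R n) := by
  ext i j
  have hcol : (u * superdiagonal R n * powColumns u) i j
      = (u ^ ((j.rev : ℕ) + 1) * superdiagonal R n) i j := by
    rw [mul_powColumns_apply, mul_assoc, (hu.pow_left _).symm.eq, ← mul_assoc, ← pow_succ']
  rw [hcol]
  cases n with
  | zero => exact i.elim0
  | succ n =>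
    cases j using Fin.cases with
    | zero => rw [mul_superdiagonal_apply_zero, mul_superdiagonal_apply_zero]
    | succ j =>
      rw [mul_superdiagonal_apply_succ, mul_superdiagonal_apply_succ, powColumns, of_apply,
        Fin.rev_castSucc, Fin.rev_succ, Fin.val_succ, Fin.val_castSucc]

theorem commute_powColumns_scalar {u : Matrix (Fin n) (Fin n) R} {a : R}
    (hu : Commute u (scalar (Fin n) a)) : Commute (powColumns u) (scalar (Fin n) a) := by
  ext i j
  rw [mul_powColumns_apply, ← (hu.pow_left _).eq]
  simp [powColumns, mul_diagonal]

theorem isUpperTriangular_powColumns {u : Matrix (Fin n) (Fin n) R} (hu : u.IsUpperTriangular) :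
    (powColumns u).IsUpperTriangular := fun _ j hij => hu.pow (j.rev : ℕ) hij

/-- The matrix `u` with `jordanBlock n a ^ M = u * N + a ^ M`, where `N` is the shift; it is
`((N + a) ^ M - a ^ M) / N` as a polynomial in `N` and `a`. -/
def jordanPowQuotient (n : ℕ) (a : R) (M : ℕ) : Matrix (Fin n) (Fin n) R :=
  ∑ i ∈ Finset.range M, jordanBlock n a ^ i * scalar (Fin n) a ^ (M - 1 - i)

theorem jordanBlock_pow (n : ℕ) (a : R) (M : ℕ) :
    jordanBlock n a ^ M
      = jordanPowQuotient n a M * superdiagonal R n + scalar (Fin n) (a ^ M) := by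
  rw [map_pow]
  exact ((commute_superdiagonal_scalar a).geom_sum₂_mul_add M).symm

theorem isUpperTriangular_jordanPowQuotient (a : R) (M : ℕ) :
    (jordanPowQuotient n a M).IsUpperTriangular :=
  sum_mem (S := blockTriangularSubsemiring R id) fun i _ =>
    ((isUpperTriangular_jordanBlock a).pow i).mul ((blockTriangular_diagonal _).pow _)

theorem jordanPowQuotient_apply_self (a : R) (M : ℕ) (i : Fin n) :
    jordanPowQuotient n a M i i = M * a ^ (M - 1) := by
  have hterm (e : ℕ) : (jordanBlock n a ^ e * scalar (Fin n) a ^ (M - 1 - e)) i i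
      = a ^ e * a ^ (M - 1 - e) := by
    rw [← map_pow, scalar_apply, mul_diagonal,
      pow_apply_self_of_isUpperTriangular (isUpperTriangular_jordanBlock a), jordanBlock_apply_self]
  simp only [jordanPowQuotient, Matrix.sum_apply, hterm, geom_sum₂_self]

theorem commute_jordanPowQuotient {a : R} {B : Matrix (Fin n) (Fin n) R}
    (hN : Commute (superdiagonal R n) B) (ha : Commute (scalar (Fin n) a) B) (M : ℕ) :
    Commute (jordanPowQuotient n a M) B :=
  Commute.sum_left _ _ _ fun _ _ => ((hN.add_left ha).pow_left _).mul_left (ha.pow_left _)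

theorem isConj_jordanBlock_of_isConj {a b : R} (hab : IsConj a b) (n : ℕ) :
    IsConj (jordanBlock n a) (jordanBlock n b) := by
  obtain ⟨c, hc⟩ := hab
  refine ⟨Units.map (scalar (Fin n)).toMonoidHom c, ?_⟩
  exact SemiconjBy.add_right (commute_superdiagonal_scalar (c : R)).symm (hc.map (scalar (Fin n)))

end Semiring

section Ring

variable [Ring R]

theorem isUnit_powColumns {u : Matrix (Fin n) (Fin n) R} (hu : u.IsUpperTriangular)
    (hdiag : ∀ i, IsUnit (u i i)) : IsUnit (powColumns u) := by
  refine isUnit_of_isUpperTriangular (isUpperTriangular_powColumns hu) fun i => ?_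
  rw [powColumns, of_apply, pow_apply_self_of_isUpperTriangular hu]
  exact (hdiag i).pow _

theorem isConj_mul_superdiagonal_add_scalar {u : Matrix (Fin n) (Fin n) R}
    (hu : u.IsUpperTriangular) (hdiag : ∀ i, IsUnit (u i i))
    (huN : Commute u (superdiagonal R n)) {c : R} (huc : Commute u (scalar (Fin n) c)) :
    IsConj (jordanBlock n c) (u * superdiagonal R n + scalar (Fin n) c) :=
  ⟨(isUnit_powColumns hu hdiag).unit,
    (semiconjBy_powColumns_superdiagonal huN).add_right (commute_powColumns_scalar huc)⟩

theorem isConj_jordanBlock_pow {a : R} (ha : IsUnit a) {M : ℕ} (hM : IsUnit (M : R)) (n : ℕ) :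
    IsConj (jordanBlock n a ^ M) (jordanBlock n (a ^ M)) := by
  rw [jordanBlock_pow]
  have hdiag (i : Fin n) : IsUnit (jordanPowQuotient n a M i i) := by
    rw [jordanPowQuotient_apply_self]
    exact hM.mul (ha.pow _)
  have hscalar : Commute (scalar (Fin n) a) (scalar (Fin n) (a ^ M)) :=
    (Commute.self_pow a M).map (scalar (Fin n))
  exact (isConj_mul_superdiagonal_add_scalar (isUpperTriangular_jordanPowQuotient a M) hdiag
    (commute_jordanPowQuotient (.refl _) (commute_superdiagonal_scalar a).symm M)
    (commute_jordanPowQuotient (commute_superdiagonal_scalar _) hscalar M)).symm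

end Ring

end JordanBlock

section Field

variable {F : Type} [Field F]

theorem conjGL_iff_isConj {m : Type} [Fintype m] [DecidableEq m] {A B : Matrix m m F} :
    ConjGL A B ↔ IsConj A B := by
  constructor
  · rintro ⟨P, hP, rfl⟩
    refine ⟨hP.unit, ?_⟩
    rw [SemiconjBy, IsUnit.unit_spec,
      nonsing_inv_mul_cancel_right _ _ ((isUnit_iff_isUnit_det _).1 hP)]
  · rintro ⟨P, hP⟩
    refine ⟨P, P.isUnit, ?_⟩
    rw [hP.eq, mul_nonsing_inv_cancel_right _ _ ((isUnit_iff_isUnit_det _).1 P.isUnit)]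

theorem det_companionMat_succ (d : ℕ) (f : F[X]) :
    (companionMat (d + 1) f).det = (-1) ^ (d + 1) * f.coeff 0 := by
  have hminor : (companionMat (d + 1) f).submatrix Fin.succ (Fin.last d).succAbove = 1 := by
    ext i j
    simp [companionMat, one_apply, Fin.ext_iff, j.isLt.ne]
  rw [det_succ_row_zero, Fintype.sum_eq_single (Fin.last d), hminor]
  · simp [companionMat, pow_succ]
  · intro j hj
    have hjd : (j : ℕ) ≠ d := fun h => hj (Fin.ext h)
    simp [companionMat, hjd]

theorem isUnit_companionMat (d : ℕ) {f : F[X]} (hf : f.coeff 0 ≠ 0) :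
    IsUnit (companionMat d f) := by
  cases d with
  | zero => exact isUnit_of_subsingleton _
  | succ d =>
    rw [isUnit_iff_isUnit_det, det_companionMat_succ, isUnit_iff_ne_zero]
    exact mul_ne_zero (pow_ne_zero _ (neg_ne_zero.2 one_ne_zero)) hf

theorem blockJordan_eq_compRingEquiv_jordanBlock (k n : ℕ) (f : F[X]) :
    blockJordan k n f = compRingEquiv (Fin n) (Fin k) F (jordanBlock n (companionMat k f)) := by
  ext ⟨a, i⟩ ⟨b, j⟩
  by_cases hab : a = b
  · subst hab
    simp [blockJordan, jordanBlock, superdiagonal]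
  · by_cases hsucc : (b : ℕ) = a + 1 <;>
      simp [blockJordan, jordanBlock, superdiagonal, hab, hsucc, one_apply]

theorem natCast_ne_zero_of_coprime_card [Fintype F] {M : ℕ}
    (hM : M.Coprime (Fintype.card F)) : (M : F) ≠ 0 := by
  have hcop : IsCoprime (M : F) (Fintype.card F : F) := hM.cast
  rw [FiniteField.cast_card_eq_zero, isCoprime_zero_right] at hcop
  exact hcop.ne_zero

theorem statement8_general {m : Type} [Fintype m] [DecidableEq m] {A B : Matrix m m F}
    (hA : IsUnit A) {M : ℕ} (hM : (M : F) ≠ 0) (hAB : ConjGL (A ^ M) B) (n : ℕ) :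
    ConjGL (compRingEquiv (Fin n) m F (jordanBlock n A) ^ M)
      (compRingEquiv (Fin n) m F (jordanBlock n B)) := by
  rw [conjGL_iff_isConj] at hAB ⊢
  have hM' : IsUnit (M : Matrix m m F) := by
    simpa using (IsUnit.mk0 (M : F) hM).map (scalar m)
  have hJ : IsConj (jordanBlock n A ^ M) (jordanBlock n B) :=
    (isConj_jordanBlock_pow hA hM' n).trans (isConj_jordanBlock_of_isConj hAB n)
  rw [← map_pow]
  exact (compRingEquiv (Fin n) m F).toMonoidHom.map_isConj hJ

end Field

/-- if `U(f,1)^M = C_f^M` is conjugate to `U(g,1) = C_g` in `GL(k,F_{q^2})`,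
then `U(f,n)^M` is conjugate to `U(g,n)` in `GL(nk,F_{q^2})` for all `n ≥ 1`. -/
theorem statement8 (p ℓ q : ℕ) (hp : p.Prime) (hℓ : 0 < ℓ) (hq : q = p ^ ℓ)
    (F : Type) [Field F] [Fintype F] (hF : Fintype.card F = q ^ 2)
    (M : ℕ) (hM : 2 ≤ M) (hcop : Nat.gcd M q = 1)
    (k : ℕ) (f g : F[X]) (hfm : f.Monic) (hgm : g.Monic)
    (hfd : f.natDegree = k) (hgd : g.natDegree = k)
    (hf0 : f.coeff 0 ≠ 0) (hg0 : g.coeff 0 ≠ 0)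
    (hconj1 : ConjGL (companionMat k f ^ M) (companionMat k g)) :
    ∀ n : ℕ, 1 ≤ n → ConjGL (blockJordan k n f ^ M) (blockJordan k n g) := by
  intro n _
  have hM0 : (M : F) ≠ 0 := natCast_ne_zero_of_coprime_card (hF ▸ Nat.Coprime.pow_right 2 hcop)
  simpa only [blockJordan_eq_compRingEquiv_jordanBlock]
    using statement8_general (isUnit_companionMat k hf0) hM0 hconj1 n
end
end

section
/- Let p be a prime, q a power of p, and M a prime with gcd(M,q) = 1. Let f be a monic irreducible polynomial of degree d over F_{q^2} with f(0) ≠ 0. Then either f(x^M) has an irreducible factor of degree d over F_{q^2} (i.e., f is an M-power polynomial), or f(x^M) is irreducible over F_{q^2}. -/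
open Polynomial Matrix

noncomputable section

/-!
Let `x` be a root of the irreducible polynomial `f` over the field `K`. If `x = b ^ M` for some
`b ∈ K⟮x⟯`, then `K⟮b⟯ = K⟮x⟯`, so the minimal polynomial of `b` is a factor of `f(X ^ M)` of degree
`deg f`. Otherwise `X ^ M - x` is irreducible over `K⟮x⟯` because `M` is prime, so a root of
`f(X ^ M)` has degree `M * deg f` over `K`, and `f(X ^ M)` is irreducible.
-/

section PowerComposition

open IntermediateField

variable {K L : Type*} [Field K] [Field L] [Algebra K L]

theorem minpoly_dvd_minpoly_pow_comp_X_pow {A : Type*} [Ring A] [Algebra K A] (b : A) (n : ℕ) :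
    minpoly K b ∣ (minpoly K (b ^ n)).comp (X ^ n) := by
  apply minpoly.dvd
  rw [aeval_comp, map_pow, aeval_X, minpoly.aeval]

theorem adjoin_simple_pow_eq_of_mem {b : L} {n : ℕ} (hb : b ∈ K⟮b ^ n⟯) : K⟮b ^ n⟯ = K⟮b⟯ :=
  le_antisymm (adjoin_simple_le_iff.mpr (pow_mem (mem_adjoin_simple_self K b) n))
    (adjoin_simple_le_iff.mpr hb)

theorem natDegree_minpoly_pow_eq_of_mem {b : L} {n : ℕ} (hint : IsIntegral K b)
    (hb : b ∈ K⟮b ^ n⟯) : (minpoly K (b ^ n)).natDegree = (minpoly K b).natDegree := by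
  rw [← adjoin.finrank (hint.pow n), adjoin_simple_pow_eq_of_mem hb, adjoin.finrank hint]

theorem statement12_general {M : ℕ} (hM : M.Prime) {f : K[X]} (hmonic : f.Monic)
    (hirr : Irreducible f) :
    (∃ h : K[X], Irreducible h ∧ h.natDegree = f.natDegree ∧ h ∣ f.comp (X ^ M)) ∨
      Irreducible (f.comp (X ^ M)) := by
  refine or_iff_not_imp_left.mpr fun hfactor ↦
    irreducible_comp hmonic (monic_X_pow M) hirr fun E _ _ x hx ↦ ?_
  rw [Polynomial.map_pow, map_X]
  refine X_pow_sub_C_irreducible_of_prime hM fun ⟨b, hmem⟩ hb ↦ hfactor ?_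
  have hpow : b ^ M = x := congrArg Subtype.val hb
  have hint : IsIntegral K x := minpoly.ne_zero_iff.mp (hx ▸ hirr.ne_zero)
  subst hpow hx
  have hbint : IsIntegral K b := hint.of_pow hM.pos
  exact ⟨minpoly K b, minpoly.irreducible hbint,
    (natDegree_minpoly_pow_eq_of_mem hbint hmem).symm, minpoly_dvd_minpoly_pow_comp_X_pow b M⟩

end PowerComposition

/-- for a prime `M` coprime to `q` and `f` monic irreducible of degree `d`
over `F_{q^2}` with `f(0) ≠ 0`, either `f(x^M)` has an irreducible factor of degree `d`,
or `f(x^M)` is irreducible. -/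
theorem statement12 (p ℓ q : ℕ) (hp : p.Prime) (hℓ : 0 < ℓ) (hq : q = p ^ ℓ)
    (M : ℕ) (hMp : M.Prime) (hcop : Nat.gcd M q = 1)
    (F : Type) [Field F] [Fintype F] (hF : Fintype.card F = q ^ 2)
    (f : F[X]) (hfm : f.Monic) (hfi : Irreducible f)
    (d : ℕ) (hd : 1 ≤ d) (hfd : f.natDegree = d) (hf0 : f.coeff 0 ≠ 0) :
    (∃ h : F[X], Irreducible h ∧ h.natDegree = d ∧ h ∣ f.comp (X ^ M)) ∨
      Irreducible (f.comp (X ^ M)) := by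
  subst hfd
  exact statement12_general hMp hfm hfi
end
end
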